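/- Let m ≥ 0, n ≥ 1 be integers and μ ∈ ℝ. Then σ_{m,n}(z) = z · (d/dz)T_{m,n}^{(μ)}(z) / T_{m,n}^{(μ)}(z) − (m+1)n is a solution of S_V with parameters ν = (m+1, −n, m+n+μ+1), at every z ≠ 0 with T_{m,n}^{(μ)}(z) ≠ 0. -/

import Mathlib

noncomputable section

open Finset

/-- Generalized binomial coefficient `C(x, k)` for real `x`. -/
def genBinom (x : ℝ) (k : ℕ) : ℝ :=
  (∏ i ∈ Finset.range k, (x - i)) / (Nat.factorial k)

/-- Associated Laguerre polynomial `L_n^{(α)}(z)`, with the convention `L_n^{(α)} = 0` for `n < 0`. -/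
def lagL (n : ℤ) (α : ℝ) : ℝ → ℝ := fun z =>
  if n < 0 then 0
  else ∑ k ∈ Finset.range (n.toNat + 1),
    (-1 : ℝ) ^ k * genBinom ((n : ℝ) + α) (n.toNat - k) * z ^ k / (Nat.factorial k)

/-- Generalised Laguerre polynomial
`T_{m,n}^{(μ)}(z) = det[(d/dz)^{j+k} L_{m+n}^{(μ+1)}(z)]_{j,k=0}^{n-1}`
(with `T_{m,0}^{(μ)} = 1`, the empty determinant). -/
def genLag (m : ℤ) (n : ℕ) (μ : ℝ) : ℝ → ℝ := fun z =>
  Matrix.det (Matrix.of fun j k : Fin n =>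
    iteratedDeriv ((j : ℕ) + (k : ℕ)) (lagL (m + n) (μ + 1)) z)

/-- Wronskian `Wr(f_1, …, f_r)(z) = det[(d/dz)^{j-1} f_k(z)]`. -/
def wronskian {r : ℕ} (f : Fin r → ℝ → ℝ) : ℝ → ℝ := fun z =>
  Matrix.det (Matrix.of fun j k : Fin r => iteratedDeriv (j : ℕ) (f k) z)

/-- The constant `c_{m,n} = (-1)^{n(2m+1+n)/2} ∏_{j=1}^n (j-1)!/(m+j)!`. -/
def cmn (m n : ℕ) : ℝ :=
  (-1 : ℝ) ^ (n * (2 * m + 1 + n) / 2) *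
    ∏ j ∈ Finset.range n, (Nat.factorial j : ℝ) / (Nat.factorial (m + j + 1))

/-- `τ_{m,n}^{(μ)}(z) = det[(z d/dz)^{j+k} L_{m+n}^{(n+μ)}(z)]_{j,k=0}^{n-1}`. -/
def tauP (m : ℤ) (n : ℕ) (μ : ℝ) : ℝ → ℝ := fun z =>
  Matrix.det (Matrix.of fun j k : Fin n =>
    ((fun (g : ℝ → ℝ) => fun t => t * deriv g t)^[(j : ℕ) + (k : ℕ)]
      (lagL (m + n) ((n : ℝ) + μ))) z)

/-- Hirota bilinear operator `D_z(f • g) = f' g - f g'`. -/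
def hirota (f g : ℝ → ℝ) (z : ℝ) : ℝ := deriv f z * g z - f z * deriv g z

/-- Probabilists' Hermite polynomial `He_n` as a real function. -/
def He (n : ℕ) : ℝ → ℝ := fun z => Polynomial.aeval z (Polynomial.hermite n)

/-- The fifth Painlevé equation (with `δ = -1/2`) for `w` with parameters `(a, b, c)`,
holding at the point `z`. -/
def PV (a b c : ℝ) (w : ℝ → ℝ) (z : ℝ) : Prop :=
  iteratedDeriv 2 w z =
    (1 / (2 * w z) + 1 / (w z - 1)) * (deriv w z) ^ 2
      - (1 / z) * deriv w z
      + (w z - 1) ^ 2 * (a * (w z) ^ 2 + b) / (z ^ 2 * w z)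
      + c * w z / z
      - w z * (w z + 1) / (2 * (w z - 1))

/-- The Jimbo–Miwa–Okamoto `σ`-equation `S_V` with parameters `(ν₁, ν₂, ν₃)`,
holding at the point `z`. -/
def SV (ν₁ ν₂ ν₃ : ℝ) (σ : ℝ → ℝ) (z : ℝ) : Prop :=
  (z * iteratedDeriv 2 σ z) ^ 2 =
    (2 * (deriv σ z) ^ 2 + (ν₁ + ν₂ + ν₃ - z) * deriv σ z + σ z) ^ 2
      - 4 * deriv σ z * (deriv σ z + ν₁) * (deriv σ z + ν₂) * (deriv σ z + ν₃)

/-!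
For a solution `p` of Kummer's equation `z p'' + (A - z) p' + N p = 0`, let `τ_n` be the `n × n`
Hankel determinant of `p, p', p'', …`. The Desnanot–Jacobi identity is the Toda equation
`τ_{n+2} τ_n = τ_{n+1} τ_{n+1}'' - (τ_{n+1}')²`. Combined with Kummer's equation it gives, by
induction on `n`, a closed first-order system for `s_n = τ_n' / τ_n`, `w_n = z s_n'` and
`a_n = s_{n+1} - s_n`. In these variables the difference `E_n` of the two sides of `S_V` for
`σ_n = z s_n - (N - n + 1) n` satisfies `w_n E_{n+1} = w_{n+1} E_n`, and `E_0 = E_1 = 0`, so every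
`E_n` vanishes.

Working in the fraction field of `ℝ[X]`, the only divisors are `z` and the `τ_k` as field elements,
so no zeros have to be avoided; `τ_n ≠ 0` forces `τ_k ≠ 0` for `k ≤ n` because `τ_k` is the
Wronskian of `p, …, p^{(k-1)}`. Clearing denominators turns `S_V` into a polynomial identity, which
can be evaluated at any point where `τ_n` does not vanish.
-/

section Derivations

-- A derivation of `K` is the second component of a ring section of `K[ε] → K`, so the universal
-- property of the localization applies to it.
open TrivSqZeroExt in
theorem exists_derivation_extending {R K : Type*} [CommRing R] [CommRing K] [Algebra R K]
    (M : Submonoid R) [IsLocalization M K] (D : Derivation ℤ R R) :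
    ∃ D' : Derivation ℤ K K, ∀ r, D' (algebraMap R K r) = algebraMap R K (D r) := by
  let φ : R →+* TrivSqZeroExt K K :=
    { toFun := fun r => inl (algebraMap R K r) + inr (algebraMap R K (D r))
      map_zero' := by simp
      map_one' := by simp
      map_add' := fun a b => by ext <;> simp [-DualNumber.inr_eq_smul_eps]
      map_mul' := fun a b => by ext <;> simp [-DualNumber.inr_eq_smul_eps, mul_comm] }
  have hφ (m : M) : IsUnit (φ m) := by
    simpa [φ, isUnit_iff_isUnit_fst] using IsLocalization.map_units K m
  let Φ : K →+* TrivSqZeroExt K K := IsLocalization.lift hφ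
  have fst_Φ : (fstHom K K K : TrivSqZeroExt K K →+* K).comp Φ = RingHom.id K :=
    IsLocalization.ringHom_ext M (by ext r; simp [Φ, φ])
  have hfst (x : K) : (Φ x).fst = x := congrArg (· x) fst_Φ
  refine ⟨Derivation.mk' ((sndHom K K).toAddMonoidHom.comp Φ.toAddMonoidHom).toIntLinearMap ?_, ?_⟩
  · intro x y
    change (Φ (x * y)).snd = x * (Φ y).snd + y * (Φ x).snd
    simp [hfst, mul_comm y]
  · intro r
    simp [Φ, φ, -DualNumber.inr_eq_smul_eps]

theorem derivation_ofNat {R : Type*} [CommRing R] (D : Derivation ℤ R R) (k : ℕ) [k.AtLeastTwo] :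
    D (ofNat(k) : R) = 0 := by
  rw [← Nat.cast_ofNat, D.map_natCast]

theorem derivation_prod {ι R : Type*} [DecidableEq ι] [CommRing R] (D : Derivation ℤ R R)
    (s : Finset ι) (f : ι → R) :
    D (∏ i ∈ s, f i) = ∑ i ∈ s, (∏ j ∈ s.erase i, f j) * D (f i) := by
  induction s using Finset.induction_on with
  | empty => simp
  | insert a s ha ih =>
    rw [prod_insert ha, D.leibniz, ih, sum_insert ha, erase_insert ha, smul_eq_mul, smul_eq_mul,
      mul_sum, add_comm]
    refine congrArg _ (sum_congr rfl fun i hi => ?_)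
    have hai : a ≠ i := fun h => ha (h ▸ hi)
    rw [erase_insert_of_ne hai, prod_insert (by simp [ha]), mul_assoc]

open Matrix in
theorem derivation_det {n R : Type*} [Fintype n] [DecidableEq n] [CommRing R]
    (D : Derivation ℤ R R) (M : Matrix n n R) :
    D M.det = ∑ j, (M.updateCol j fun i => D (M i j)).det := by
  simp only [det_apply, Units.smul_def, map_sum, map_zsmul, derivation_prod, Finset.smul_sum]
  rw [sum_comm]
  refine sum_congr rfl fun j _ => sum_congr rfl fun π _ => ?_
  rw [← prod_erase_mul _ _ (mem_univ j), updateCol_self]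
  congr 2
  exact prod_congr rfl fun i hi => (updateCol_ne (ne_of_mem_erase hi)).symm

theorem iterate_derivation_sum_const_mul {K : Type*} [CommRing K] {D : Derivation ℤ K K} {n : ℕ}
    {c : Fin n → K} (hc : ∀ j, D (c j) = 0) (g : Fin n → K) (i : ℕ) :
    D^[i] (∑ j, c j * g j) = ∑ j, c j * D^[i] (g j) := by
  induction i with
  | zero => rfl
  | succ i ih => simp [Function.iterate_succ_apply', ih, hc]

end Derivations

section Wronskian

open Matrix

variable {K : Type*} [Field K] {D : Derivation ℤ K K} {n : ℕ}

/-- The Wronskian matrix of a finite family in a differential field. -/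
def wronskianMatrix (D : Derivation ℤ K K) (g : Fin n → K) : Matrix (Fin n) (Fin n) K :=
  Matrix.of fun i j => D^[i] (g j)

/-- Linear dependence of a finite family over the constants of `D`. -/
def ConstDependent (D : Derivation ℤ K K) (g : Fin n → K) : Prop :=
  ∃ c : Fin n → K, c ≠ 0 ∧ (∀ j, D (c j) = 0) ∧ ∑ j, c j * g j = 0

theorem ConstDependent.of_castSucc {g : Fin (n + 1) → K}
    (h : ConstDependent D (g ∘ Fin.castSucc)) : ConstDependent D g := by
  obtain ⟨c, hc, hconst, hsum⟩ := h
  refine ⟨Fin.snoc c 0, fun h => hc (funext fun j => ?_),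
    Fin.lastCases (by simp) (by simpa using hconst), ?_⟩
  · simpa using congrFun h j.castSucc
  · simpa [Fin.sum_univ_castSucc] using hsum

theorem ConstDependent.det_wronskianMatrix_eq_zero {g : Fin n → K} (h : ConstDependent D g) :
    (wronskianMatrix D g).det = 0 := by
  obtain ⟨c, hc, hconst, hsum⟩ := h
  refine exists_mulVec_eq_zero_iff.1 ⟨c, hc, funext fun i => ?_⟩
  have := iterate_derivation_sum_const_mul hconst g i
  rw [hsum, iterate_map_zero] at this
  simpa [mulVec, dotProduct, wronskianMatrix, mul_comm] using this.symm

theorem eq_zero_of_det_wronskianMatrix_castSucc_ne_zero {g : Fin (n + 1) → K}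
    (hg : (wronskianMatrix D (g ∘ Fin.castSucc)).det ≠ 0) {v : Fin (n + 1) → K}
    (hlast : v (Fin.last n) = 0) (hv : ∀ i < n, ∑ j, D^[i] (g j) * v j = 0) :
    v = 0 := by
  have hinit : v ∘ Fin.castSucc = 0 := eq_zero_of_mulVec_eq_zero hg <| funext fun i => by
    simpa [mulVec, dotProduct, wronskianMatrix, Fin.sum_univ_castSucc, hlast] using hv i i.isLt
  exact funext <| Fin.lastCases hlast (congrFun hinit)

-- Normalize a kernel vector `c` to have last entry `1`; differentiating the relations shows that
-- `D c` satisfies all but the last of them, and its last entry is `0`.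
theorem constDependent_of_det_wronskianMatrix_castSucc_ne_zero {g : Fin (n + 1) → K}
    (hinit : (wronskianMatrix D (g ∘ Fin.castSucc)).det ≠ 0)
    (hg : (wronskianMatrix D g).det = 0) : ConstDependent D g := by
  obtain ⟨v, hv, hker⟩ := exists_mulVec_eq_zero_iff.2 hg
  have hv_rel (i : ℕ) (hi : i < n + 1) : ∑ j, D^[i] (g j) * v j = 0 := congrFun hker ⟨i, hi⟩
  have hlast : v (Fin.last n) ≠ 0 := fun h =>
    hv (eq_zero_of_det_wronskianMatrix_castSucc_ne_zero hinit h fun i hi => hv_rel i (by omega))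
  set c := fun j => v j / v (Fin.last n) with hcdef
  have hc_rel (i : ℕ) (hi : i < n + 1) : ∑ j, D^[i] (g j) * c j = 0 := by
    simp only [hcdef, ← mul_div_assoc, ← sum_div, hv_rel i hi, zero_div]
  have hconst : (fun j => D (c j)) = 0 := by
    refine eq_zero_of_det_wronskianMatrix_castSucc_ne_zero hinit (by simp [hcdef, hlast])
      fun i hi => ?_
    have hderiv := congrArg D (hc_rel i (by omega))
    simp only [map_sum, Derivation.leibniz, smul_eq_mul, map_zero, sum_add_distrib] at hderiv
    have hnext := hc_rel (i + 1) (by omega)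
    simp only [Function.iterate_succ_apply', mul_comm _ (c _)] at hnext
    rwa [hnext, add_zero] at hderiv
  refine ⟨c, fun h => ?_, congrFun hconst, ?_⟩
  · simpa [hcdef, hlast] using congrFun h (Fin.last n)
  · simpa [mul_comm] using hc_rel 0 n.succ_pos

theorem det_wronskianMatrix_eq_zero_iff {g : Fin n → K} :
    (wronskianMatrix D g).det = 0 ↔ ConstDependent D g := by
  refine ⟨fun hg => ?_, ConstDependent.det_wronskianMatrix_eq_zero⟩
  induction n with
  | zero => simp at hg
  | succ n ih =>
    by_cases hinit : (wronskianMatrix D (g ∘ Fin.castSucc)).det = 0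
    · exact (ih hinit).of_castSucc
    · exact constDependent_of_det_wronskianMatrix_castSucc_ne_zero hinit hg

theorem det_wronskianMatrix_ne_zero_of_le {k : ℕ} {g : ℕ → K}
    (hg : (wronskianMatrix D fun j : Fin n => g j).det ≠ 0) (hk : k ≤ n) :
    (wronskianMatrix D fun j : Fin k => g j).det ≠ 0 := by
  induction n, hk using Nat.le_induction with
  | base => exact hg
  | succ n _ ih =>
    rw [ne_eq, det_wronskianMatrix_eq_zero_iff] at hg
    exact ih fun h => hg (ConstDependent.of_castSucc (det_wronskianMatrix_eq_zero_iff.1 h))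

end Wronskian

section HankelDeterminants

open Matrix

variable {R S : Type*} [CommRing R] [CommRing S]

theorem sylvester_determinant_identity {m n : Type*} [Fintype m] [DecidableEq m] [Fintype n]
    [DecidableEq n] (M : Matrix (m ⊕ n) (m ⊕ n) R) (hM : IsUnit M.toBlocks₁₁.det) :
    (Matrix.of fun i j : n => (M.submatrix (Sum.map id fun _ : Fin 1 => i)
      (Sum.map id fun _ : Fin 1 => j)).det).det * M.toBlocks₁₁.det =
        M.toBlocks₁₁.det ^ Fintype.card n * M.det := by
  have := M.toBlocks₁₁.invertibleOfIsUnitDet hM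
  set schur := M.toBlocks₂₂ - M.toBlocks₂₁ * ⅟M.toBlocks₁₁ * M.toBlocks₁₂
  have hminor (i j : n) : (M.submatrix (Sum.map id fun _ : Fin 1 => i)
      (Sum.map id fun _ : Fin 1 => j)).det = M.toBlocks₁₁.det * schur i j := by
    rw [← fromBlocks_toBlocks (M.submatrix _ _)]
    exact (det_fromBlocks₁₁ M.toBlocks₁₁ _ _ _).trans (congrArg _ (det_unique _))
  have hdet : M.det = M.toBlocks₁₁.det * schur.det := by
    conv_lhs => rw [← fromBlocks_toBlocks M, det_fromBlocks₁₁]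
  simp only [hminor]
  change (M.toBlocks₁₁.det • schur).det * _ = _
  rw [det_smul, hdet]
  ring

/-- The `n × n` Hankel determinant of a sequence. -/
def hankelDet (h : ℕ → R) (n : ℕ) : R :=
  (Matrix.of fun i j : Fin n => h (i + j)).det

/-- The row (or column) indices `0, …, n - 1, x` of a bordered `n × n` matrix. -/
def borderIndex (n x : ℕ) : Fin n ⊕ Fin 1 → ℕ :=
  Sum.elim (fun i => i) fun _ => x

/-- The Hankel determinant on the rows `0, …, n - 1, x` and the columns `0, …, n - 1, y`. -/
def borderedHankelDet (h : ℕ → R) (n x y : ℕ) : R :=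
  (Matrix.of fun i j : Fin n ⊕ Fin 1 => h (borderIndex n x i + borderIndex n y j)).det

@[simp]
theorem hankelDet_zero (h : ℕ → R) : hankelDet h 0 = 1 := det_isEmpty

@[simp]
theorem hankelDet_one (h : ℕ → R) : hankelDet h 1 = h 0 := det_unique _

theorem map_hankelDet (f : R →+* S) (h : ℕ → R) (n : ℕ) :
    f (hankelDet h n) = hankelDet (fun j => f (h j)) n :=
  f.map_det _

theorem hankelDet_add (h : ℕ → R) (n k : ℕ) :
    hankelDet h (n + k) = (Matrix.of fun i j : Fin n ⊕ Fin k =>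
      h ((finSumFinEquiv i : Fin (n + k)) + (finSumFinEquiv j : Fin (n + k)))).det :=
  (det_submatrix_equiv_self finSumFinEquiv _).symm

theorem borderedHankelDet_self (h : ℕ → R) (n : ℕ) :
    borderedHankelDet h n n n = hankelDet h (n + 1) := by
  rw [hankelDet_add, borderedHankelDet]
  congr 1
  ext (i | i) (j | j) <;> simp [borderIndex]

theorem borderedHankelDet_comm (h : ℕ → R) (n x y : ℕ) :
    borderedHankelDet h n x y = borderedHankelDet h n y x := by
  rw [borderedHankelDet, ← det_transpose]
  congr 1
  ext i j
  simp [add_comm]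

theorem desnanot_jacobi_hankelDet (h : ℕ → R) (n : ℕ) (hn : IsUnit (hankelDet h n)) :
    hankelDet h (n + 2) * hankelDet h n =
      borderedHankelDet h n n n * borderedHankelDet h n (n + 1) (n + 1) -
        borderedHankelDet h n n (n + 1) * borderedHankelDet h n (n + 1) n := by
  let M := Matrix.of fun i j : Fin n ⊕ Fin 2 =>
    h ((finSumFinEquiv i : Fin (n + 2)) + (finSumFinEquiv j : Fin (n + 2)))
  have hminor (i j : Fin 2) : (M.submatrix (Sum.map id fun _ : Fin 1 => i)
      (Sum.map id fun _ : Fin 1 => j)).det = borderedHankelDet h n (n + i) (n + j) := by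
    rw [borderedHankelDet]
    congr 1
    ext (a | a) (b | b) <;> rfl
  have hsylvester := sylvester_determinant_identity M hn
  change _ * hankelDet h n = hankelDet h n ^ Fintype.card (Fin 2) * _ at hsylvester
  rw [← hankelDet_add h n 2, Fintype.card_fin, det_fin_two] at hsylvester
  simp only [of_apply, hminor] at hsylvester
  exact hn.mul_right_cancel (by linear_combination -hsylvester)

theorem derivation_borderedHankelDet {D : Derivation ℤ R R} {h : ℕ → R}
    (hD : ∀ j, D (h j) = h (j + 1)) (n x : ℕ) :
    D (borderedHankelDet h n x n) = borderedHankelDet h n x (n + 1) := by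
  have hnext (j : Fin n) : ∃ j' ≠ Sum.inl j, borderIndex n n j' = j + 1 := by
    by_cases hj : (j : ℕ) + 1 < n
    · exact ⟨Sum.inl ⟨j + 1, hj⟩, by simp [Fin.ext_iff], rfl⟩
    · exact ⟨Sum.inr 0, Sum.inr_ne_inl, by simp only [borderIndex, Sum.elim_inr]; omega⟩
  rw [borderedHankelDet, derivation_det, Fintype.sum_eq_single (Sum.inr 0)]
  · rw [borderedHankelDet]
    congr 1
    ext i (j | j)
    · simp [borderIndex]
    · simp [borderIndex, hD, add_assoc, Subsingleton.elim j 0]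
  · rintro (j | j) hj
    · obtain ⟨j', hne, hj'⟩ := hnext j
      refine det_zero_of_column_eq hne.symm fun i => ?_
      rw [updateCol_self, updateCol_ne hne, of_apply, of_apply, hD, hj', add_assoc]
      rfl
    · exact absurd (congrArg Sum.inr (Subsingleton.elim j 0)) hj

theorem toda_hankelDet {K : Type*} [Field K] {D : Derivation ℤ K K} {h : ℕ → K}
    (hD : ∀ j, D (h j) = h (j + 1)) {n : ℕ} (hn : hankelDet h n ≠ 0) :
    hankelDet h (n + 2) * hankelDet h n =
      hankelDet h (n + 1) * D (D (hankelDet h (n + 1))) - D (hankelDet h (n + 1)) ^ 2 := by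
  have hderiv : D (hankelDet h (n + 1)) = borderedHankelDet h n n (n + 1) := by
    rw [← borderedHankelDet_self, derivation_borderedHankelDet hD]
  rw [desnanot_jacobi_hankelDet h n hn.isUnit, borderedHankelDet_self, hderiv,
    borderedHankelDet_comm h n n (n + 1), derivation_borderedHankelDet hD]
  ring

theorem hankelDet_ne_zero_of_le {K : Type*} [Field K] {D : Derivation ℤ K K} {h : ℕ → K}
    (hD : ∀ j, D (h j) = h (j + 1)) {n k : ℕ} (hn : hankelDet h n ≠ 0) (hk : k ≤ n) :
    hankelDet h k ≠ 0 := by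
  have hiter (i j : ℕ) : D^[i] (h j) = h (i + j) := by
    induction i with
    | zero => simp
    | succ i ih => rw [Function.iterate_succ_apply', ih, hD, Nat.add_right_comm]
  have hwronskian (r : ℕ) : hankelDet h r = (wronskianMatrix D fun j : Fin r => h j).det := by
    simp only [hankelDet, wronskianMatrix, hiter]
  rw [hwronskian] at hn ⊢
  exact det_wronskianMatrix_ne_zero_of_le hn hk

end HankelDeterminants

section SigmaForm

variable {R S : Type*} [CommRing R] [CommRing S]

/-- The numerator over `q ^ 8` of the difference of the two sides of `S_V` at `σ = s / q`,
`σ' = s₁ / q ^ 2`, `z σ'' = u / q ^ 3`. -/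
def sigmaForm (ν₁ ν₂ ν₃ q z s s₁ u : R) : R :=
  (u * q) ^ 2 - ((2 * s₁ ^ 2 + ((ν₁ + ν₂ + ν₃ - z) * s₁ + s * q) * q ^ 2) ^ 2 -
    4 * s₁ * (s₁ + ν₁ * q ^ 2) * (s₁ + ν₂ * q ^ 2) * (s₁ + ν₃ * q ^ 2))

theorem map_sigmaForm (f : R →+* S) (ν₁ ν₂ ν₃ q z s s₁ u : R) :
    f (sigmaForm ν₁ ν₂ ν₃ q z s s₁ u) =
      sigmaForm (f ν₁) (f ν₂) (f ν₃) (f q) (f z) (f s) (f s₁) (f u) := by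
  simp only [sigmaForm, map_sub, map_add, map_mul, map_pow, map_ofNat]

theorem sigmaForm_div {K : Type*} [Field K] {q : K} (hq : q ≠ 0) (ν₁ ν₂ ν₃ z s s₁ u : K) :
    sigmaForm ν₁ ν₂ ν₃ 1 z (s / q) (s₁ / q ^ 2) (u / q ^ 3) =
      sigmaForm ν₁ ν₂ ν₃ q z s s₁ u / q ^ 8 := by
  simp only [sigmaForm]
  field_simp

end SigmaForm

section TodaState

variable {K : Type*} [Field K]

/-- The polynomial in `s_n` and `w_n = z s_n'` that equals `z w_n (s_{n+1} - s_{n-1})` along the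
Toda chain of a solution of Kummer's equation `z y'' + (A - z) y' + N y = 0`. -/
def todaF (A N z : K) (n : ℕ) (s w : K) : K :=
  z * w - (A + 2 * n - 2) * w + (A + 2 * n - 2) * s + n * (N - n + 1)

/-- The right-hand side of the Riccati equation `z a_n' = G_n` for `a_n = s_{n+1} - s_n` along the
Toda chain of a solution of Kummer's equation `z y'' + (A - z) y' + N y = 0`. -/
def todaG (A N z : K) (n : ℕ) (s w a : K) : K :=
  -2 * w - z * a ^ 2 + z * a - (A + 2 * n) * a - N - 2 * s + 2 * n

/-- The difference of the two sides of `S_V` at level `n` of the Toda chain, where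
`σ = z s - (N - n + 1) n`, in terms of `s`, `w = z s'` and `zw' = z w'`. -/
def sigmaDefect (A N z : K) (n : ℕ) (s w zw' : K) : K :=
  sigmaForm (N - n + 1) (-n) (N + A - 1) 1 z (z * s - (N - n + 1) * n) (s + w) (w + zw')

/-- The first-order system satisfied at level `n` of the Toda chain by the logarithmic derivative
`s = τ_n' / τ_n`, by `w = z s'` and by `a = τ_{n+1}' / τ_{n+1} - s`. -/
structure IsTodaState (D : Derivation ℤ K K) (A N z : K) (n : ℕ) (s w a : K) : Prop where
  deriv_s : z * D s = w
  deriv_w : z * D w = w + 2 * z * w * a - todaF A N z n s w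
  deriv_a : z * D a = todaG A N z n s w a

variable {D : Derivation ℤ K K} {A N z s w a v b : K} {n : ℕ}

theorem IsTodaState.deriv_next_s (h : IsTodaState D A N z n s w a) :
    z * D (s + a) = w + todaG A N z n s w a := by
  rw [map_add, mul_add, h.deriv_s, h.deriv_a]

theorem IsTodaState.deriv_next_w (hz : D z = 1) (hA : D A = 0) (hN : D N = 0)
    (h : IsTodaState D A N z n s w a) (hv : v = w + todaG A N z n s w a) :
    z * D v = v + todaF A N z (n + 1) (s + a) v - 2 * z * v * a := by
  have hDv : D v = -D w + a - a ^ 2 + (z - 2 * z * a - A - 2 * n) * D a - 2 * D s := by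
    simp only [hv, todaG, map_add, map_sub, Derivation.leibniz, Derivation.leibniz_pow,
      D.map_natCast, derivation_ofNat, map_neg, smul_eq_mul, nsmul_eq_mul, hz, hA, hN]
    push_cast
    ring
  have hzDv : z * D v = -(w + 2 * z * w * a - todaF A N z n s w) + z * (a - a ^ 2) +
      (z - 2 * z * a - A - 2 * n) * todaG A N z n s w a - 2 * w := by
    linear_combination z * hDv - h.deriv_w + (z - 2 * z * a - A - 2 * n) * h.deriv_a -
      2 * h.deriv_s
  rw [hzDv, hv]
  simp only [todaF, todaG]
  push_cast
  ring

theorem IsTodaState.succ (hz : D z = 1) (hA : D A = 0) (hN : D N = 0) (hz0 : z ≠ 0)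
    (h : IsTodaState D A N z n s w a) (hv : z * D (s + a) = v) (hv0 : v ≠ 0)
    (htoda : z * D v = v + z * v * (b - a)) : IsTodaState D A N z (n + 1) (s + a) v b := by
  have hv' : v = w + todaG A N z n s w a := hv ▸ h.deriv_next_s
  have hF : z * v * (a + b) = todaF A N z (n + 1) (s + a) v := by
    linear_combination h.deriv_next_w hz hA hN hv' - htoda
  refine ⟨hv, by linear_combination htoda - hF, mul_left_cancel₀ (mul_ne_zero hz0 hv0) ?_⟩
  have hDF : v * (a + b) + z * D v * (a + b) + z * v * (D a + D b) =
      v + z * D v - (A + 2 * n) * D v + (A + 2 * n) * D (s + a) := by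
    have := congrArg D hF
    simp only [todaF, map_add, map_sub, Derivation.leibniz, D.map_natCast, D.map_one_eq_zero,
      derivation_ofNat, smul_eq_mul, Nat.cast_add, Nat.cast_one, hz, hA, hN] at this ⊢
    linear_combination this
  have hDa := h.deriv_a
  simp only [todaG] at hv' hDa ⊢
  push_cast
  linear_combination z * hDF + (z - A - 2 * n - z * (a + b)) * htoda + (A + 2 * n) * hv -
    z * v * hDa + 2 * z * v * hv'

theorem IsTodaState.sigmaDefect_succ (hz : D z = 1) (hA : D A = 0) (hN : D N = 0)
    (h : IsTodaState D A N z n s w a) (hv : z * D (s + a) = v) :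
    w * sigmaDefect A N z (n + 1) (s + a) v (z * D v) = v * sigmaDefect A N z n s w (z * D w) := by
  have hv' : v = w + todaG A N z n s w a := hv ▸ h.deriv_next_s
  rw [h.deriv_next_w hz hA hN hv', h.deriv_w, hv']
  simp only [sigmaDefect, sigmaForm, todaF, todaG]
  push_cast
  ring

theorem IsTodaState.sigmaDefect_one (hz : D z = 1) (hA : D A = 0) (hN : D N = 0)
    (h : IsTodaState D A N z 0 0 0 a) (hv : z * D a = v) :
    sigmaDefect A N z 1 a v (z * D v) = 0 := by
  have hv' : v = todaG A N z 0 0 0 a := hv ▸ h.deriv_a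
  have hw := h.deriv_next_w (v := v) hz hA hN (by rw [zero_add]; exact hv')
  rw [zero_add, zero_add] at hw
  rw [hw, hv']
  simp only [sigmaDefect, sigmaForm, todaF, todaG]
  push_cast
  ring

end TodaState

section HankelSigma

variable {K : Type*} [Field K] {D : Derivation ℤ K K} {h : ℕ → K} {A N z : K} {n : ℕ}

/-- The logarithmic derivative `s_n = τ_n' / τ_n` of the Hankel determinant `τ_n` of `h`. -/
def hankelLogDeriv (D : Derivation ℤ K K) (h : ℕ → K) (n : ℕ) : K :=
  D (hankelDet h n) / hankelDet h n

/-- The `σ`-function `z τ_n' / τ_n - (N - n + 1) n` of the Hankel determinant `τ_n` of `h`. -/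
def hankelSigma (D : Derivation ℤ K K) (h : ℕ → K) (N z : K) (n : ℕ) : K :=
  z * hankelLogDeriv D h n - (N - n + 1) * n

@[simp]
theorem hankelLogDeriv_zero : hankelLogDeriv D h 0 = 0 := by
  simp [hankelLogDeriv]

theorem derivation_hankelLogDeriv (hD : ∀ j, D (h j) = h (j + 1))
    (h_succ : hankelDet h (n + 1) ≠ 0) :
    D (hankelLogDeriv D h (n + 1)) =
      hankelDet h (n + 2) * hankelDet h n / hankelDet h (n + 1) ^ 2 := by
  rw [toda_hankelDet hD (hankelDet_ne_zero_of_le hD h_succ n.le_succ), hankelLogDeriv,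
    Derivation.leibniz_div]
  simp only [smul_eq_mul, sq]
  ring

theorem derivation_hankelLogDeriv_ne_zero (hD : ∀ j, D (h j) = h (j + 1))
    (hn : hankelDet h (n + 2) ≠ 0) : D (hankelLogDeriv D h (n + 1)) ≠ 0 := by
  have h_succ := hankelDet_ne_zero_of_le hD hn (n + 1).le_succ
  rw [derivation_hankelLogDeriv hD h_succ]
  exact div_ne_zero (mul_ne_zero hn (hankelDet_ne_zero_of_le hD h_succ n.le_succ))
    (pow_ne_zero 2 h_succ)

theorem derivation_derivation_hankelLogDeriv (hD : ∀ j, D (h j) = h (j + 1))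
    (hn : hankelDet h (n + 2) ≠ 0) :
    D (D (hankelLogDeriv D h (n + 1))) = D (hankelLogDeriv D h (n + 1)) *
      (hankelLogDeriv D h (n + 2) - 2 * hankelLogDeriv D h (n + 1) + hankelLogDeriv D h n) := by
  have h₁ := hankelDet_ne_zero_of_le hD hn (n + 1).le_succ
  have h₀ := hankelDet_ne_zero_of_le hD h₁ n.le_succ
  rw [derivation_hankelLogDeriv hD h₁, Derivation.leibniz_div]
  simp only [Derivation.leibniz, Derivation.leibniz_pow, hankelLogDeriv, smul_eq_mul, nsmul_eq_mul]
  field_simp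
  push_cast
  ring

theorem isTodaState_zero (hD : ∀ j, D (h j) = h (j + 1))
    (kummer : z * h 2 + (A - z) * h 1 + N * h 0 = 0) (h₀ : h 0 ≠ 0) :
    IsTodaState D A N z 0 0 0 (hankelLogDeriv D h 1) := by
  refine ⟨by simp, by simp [todaF], ?_⟩
  rw [hankelLogDeriv, hankelDet_one, hD, Derivation.leibniz_div, hD, hD]
  simp only [todaG, smul_eq_mul]
  field_simp
  linear_combination h 0 * kummer

theorem isTodaState_hankelLogDeriv (hD : ∀ j, D (h j) = h (j + 1)) (hz : D z = 1) (hA : D A = 0)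
    (hN : D N = 0) (kummer : z * h 2 + (A - z) * h 1 + N * h 0 = 0)
    (hn : hankelDet h (n + 1) ≠ 0) :
    IsTodaState D A N z n (hankelLogDeriv D h n) (z * D (hankelLogDeriv D h n))
      (hankelLogDeriv D h (n + 1) - hankelLogDeriv D h n) := by
  have hz0 : z ≠ 0 := fun h0 => by simp [h0] at hz
  induction n with
  | zero => simpa using isTodaState_zero hD kummer (by simpa using hn)
  | succ n ih =>
    have h_succ := hankelDet_ne_zero_of_le hD hn (n + 1).le_succ
    have hsum : hankelLogDeriv D h n + (hankelLogDeriv D h (n + 1) - hankelLogDeriv D h n) =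
        hankelLogDeriv D h (n + 1) := add_sub_cancel _ _
    have hw0 := mul_ne_zero hz0 (derivation_hankelLogDeriv_ne_zero hD hn)
    have := (ih h_succ).succ (b := hankelLogDeriv D h (n + 2) - hankelLogDeriv D h (n + 1))
      hz hA hN hz0 (by rw [hsum]) hw0 ?_
    · rwa [hsum] at this
    · rw [D.leibniz, derivation_derivation_hankelLogDeriv hD hn]
      simp only [smul_eq_mul, hz]
      ring

theorem sigmaForm_hankelSigma_eq_sigmaDefect (hz : D z = 1) (hN : D N = 0) :
    sigmaForm (N - n + 1) (-n) (N + A - 1) 1 z (hankelSigma D h N z n)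
        (D (hankelSigma D h N z n)) (z * D (D (hankelSigma D h N z n))) =
      sigmaDefect A N z n (hankelLogDeriv D h n) (z * D (hankelLogDeriv D h n))
        (z * D (z * D (hankelLogDeriv D h n))) := by
  have hderiv : D (hankelSigma D h N z n) =
      hankelLogDeriv D h n + z * D (hankelLogDeriv D h n) := by
    simp [hankelSigma, hz, hN, add_comm]
  rw [hderiv, map_add, mul_add]
  rfl

theorem sigmaForm_hankelSigma (hD : ∀ j, D (h j) = h (j + 1)) (hz : D z = 1) (hA : D A = 0)
    (hN : D N = 0) (kummer : z * h 2 + (A - z) * h 1 + N * h 0 = 0) (hn : hankelDet h n ≠ 0) :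
    sigmaForm (N - n + 1) (-n) (N + A - 1) 1 z (hankelSigma D h N z n)
      (D (hankelSigma D h N z n)) (z * D (D (hankelSigma D h N z n))) = 0 := by
  have hz0 : z ≠ 0 := fun h0 => by simp [h0] at hz
  rw [sigmaForm_hankelSigma_eq_sigmaDefect hz hN]
  induction n with
  | zero => simp [sigmaDefect, sigmaForm]
  | succ n ih =>
    have state := isTodaState_hankelLogDeriv hD hz hA hN kummer hn
    obtain _ | n := n
    · simpa using IsTodaState.sigmaDefect_one hz hA hN (by simpa using state) rfl
    · have h_succ := hankelDet_ne_zero_of_le hD hn (n + 1).le_succ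
      have hw0 := mul_ne_zero hz0 (derivation_hankelLogDeriv_ne_zero hD hn)
      have := state.sigmaDefect_succ hz hA hN rfl
      rw [ih h_succ, mul_zero, add_sub_cancel] at this
      exact (mul_eq_zero.1 this).resolve_left hw0

end HankelSigma

section RationalSolutions

open Polynomial

theorem SV_iff_sigmaForm_eq_zero {ν₁ ν₂ ν₃ : ℝ} {σ : ℝ → ℝ} {z : ℝ} :
    SV ν₁ ν₂ ν₃ σ z ↔
      sigmaForm ν₁ ν₂ ν₃ 1 z (σ z) (deriv σ z) (z * iteratedDeriv 2 σ z) = 0 := by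
  simp only [SV, sigmaForm, mul_one, one_pow, sub_eq_zero, add_assoc]

/-- The numerator of the derivative of `P / Q ^ k` over the denominator `Q ^ (k + 1)`. -/
def divPowDerivNumer (k : ℕ) (P Q : ℝ[X]) : ℝ[X] :=
  derivative P * Q - k * P * derivative Q

theorem quotient_rule_div_pow {F : Type*} [Field F] {q : F} (hq : q ≠ 0) (k : ℕ) (p p' q' : F) :
    (p' * q ^ k - p * (k * q ^ (k - 1) * q')) / (q ^ k) ^ 2 =
      (p' * q - k * p * q') / q ^ (k + 1) := by
  obtain _ | k := k
  · simp only [Nat.cast_zero]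
    field_simp
    ring
  · rw [Nat.add_sub_cancel]
    field_simp
    ring

theorem hasDerivAt_eval_div_eval_pow (k : ℕ) (P : ℝ[X]) {Q : ℝ[X]} {z : ℝ} (hQ : Q.eval z ≠ 0) :
    HasDerivAt (fun t => P.eval t / Q.eval t ^ k)
      ((divPowDerivNumer k P Q).eval z / Q.eval z ^ (k + 1)) z :=
  ((P.hasDerivAt z).div ((Q.hasDerivAt z).pow k) (pow_ne_zero k hQ)).congr_deriv <|
    (quotient_rule_div_pow hQ k _ _ _).trans (by simp [divPowDerivNumer])

theorem deriv_eventuallyEq_eval_div_eval_pow {f : ℝ → ℝ} {k : ℕ} {P Q : ℝ[X]} {z : ℝ}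
    (hQ : Q.eval z ≠ 0) (hf : f =ᶠ[nhds z] fun t => P.eval t / Q.eval t ^ k) :
    deriv f =ᶠ[nhds z] fun t => (divPowDerivNumer k P Q).eval t / Q.eval t ^ (k + 1) :=
  hf.deriv.trans <| (Q.continuous.continuousAt.eventually_ne hQ).mono fun _ ht =>
    (hasDerivAt_eval_div_eval_pow k P ht).deriv

variable {K : Type*} [Field K] [Algebra ℝ[X] K] [IsFractionRing ℝ[X] K] {D : Derivation ℤ K K}

theorem derivation_algebraMap_div_pow
    (hD : ∀ p : ℝ[X], D (algebraMap ℝ[X] K p) = algebraMap ℝ[X] K (derivative p)) (k : ℕ)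
    (P : ℝ[X]) {Q : ℝ[X]} (hQ : Q ≠ 0) :
    D (algebraMap ℝ[X] K P / algebraMap ℝ[X] K Q ^ k) =
      algebraMap ℝ[X] K (divPowDerivNumer k P Q) / algebraMap ℝ[X] K Q ^ (k + 1) := by
  have hQK : algebraMap ℝ[X] K Q ≠ 0 := by simpa using hQ
  rw [divPowDerivNumer, map_sub, map_mul, map_mul, map_mul, map_natCast,
    ← quotient_rule_div_pow hQK, Derivation.leibniz_div, Derivation.leibniz_pow, hD, hD]
  simp only [smul_eq_mul, nsmul_eq_mul]
  ring

theorem SV_of_sigmaForm_fraction_eq_zero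
    (hD : ∀ p : ℝ[X], D (algebraMap ℝ[X] K p) = algebraMap ℝ[X] K (derivative p))
    {ν₁ ν₂ ν₃ : ℝ} {P Q : ℝ[X]} {s : K} (hs : s = algebraMap ℝ[X] K P / algebraMap ℝ[X] K Q)
    (hform : sigmaForm (algebraMap ℝ[X] K (C ν₁)) (algebraMap ℝ[X] K (C ν₂))
      (algebraMap ℝ[X] K (C ν₃)) 1 (algebraMap ℝ[X] K X) s (D s)
      (algebraMap ℝ[X] K X * D (D s)) = 0)
    {σ : ℝ → ℝ} {z : ℝ} (hQ : Q.eval z ≠ 0) (hσ : σ =ᶠ[nhds z] fun t => P.eval t / Q.eval t) :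
    SV ν₁ ν₂ ν₃ σ z := by
  have hQ0 : Q ≠ 0 := fun h => hQ (by rw [h, eval_zero])
  have hQK : algebraMap ℝ[X] K Q ≠ 0 := by simpa using hQ0
  set P₁ := divPowDerivNumer 1 P Q
  set P₂ := divPowDerivNumer 2 P₁ Q
  have hpoly : sigmaForm (C ν₁) (C ν₂) (C ν₃) Q X P P₁ (X * P₂) = 0 := by
    have hDs : D s = algebraMap ℝ[X] K P₁ / algebraMap ℝ[X] K Q ^ 2 := by
      rw [hs, ← derivation_algebraMap_div_pow hD 1 P hQ0, pow_one]
    rw [hDs, derivation_algebraMap_div_pow hD 2 P₁ hQ0, hs, ← mul_div_assoc, ← map_mul,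
      sigmaForm_div hQK, ← map_sigmaForm] at hform
    simpa [hQK] using hform
  have hderiv : deriv σ =ᶠ[nhds z] fun t => P₁.eval t / Q.eval t ^ 2 :=
    deriv_eventuallyEq_eval_div_eval_pow hQ (by simpa using hσ)
  have hderiv₂ : iteratedDeriv 2 σ z = P₂.eval z / Q.eval z ^ 3 := by
    rw [iteratedDeriv_succ, iteratedDeriv_one]
    exact (deriv_eventuallyEq_eval_div_eval_pow hQ hderiv).self_of_nhds
  rw [SV_iff_sigmaForm_eq_zero, hσ.self_of_nhds, hderiv.self_of_nhds, hderiv₂, ← mul_div_assoc,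
    sigmaForm_div hQ]
  have := map_sigmaForm (evalRingHom z) (C ν₁) (C ν₂) (C ν₃) Q X P P₁ (X * P₂)
  rw [hpoly] at this
  simp only [coe_evalRingHom, eval_C, eval_X, eval_mul, eval_zero] at this
  rw [← this, zero_div]

theorem SV_hankelDet_of_kummer {p : ℝ[X]} {N A : ℝ}
    (kummer : X * derivative (derivative p) + (C A - X) * derivative p + C N * p = 0) {n : ℕ}
    {τ : ℝ[X]} (hτ : τ = hankelDet (fun j => derivative^[j] p) n) {z : ℝ} (hz : τ.eval z ≠ 0) :
    SV (N - n + 1) (-n) (N + A - 1)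
      (fun t => t * deriv (fun x => τ.eval x) t / τ.eval t - (N - n + 1) * n) z := by
  obtain ⟨D, hD⟩ := exists_derivation_extending (K := FractionRing ℝ[X]) (nonZeroDivisors ℝ[X])
    ((derivative' (R := ℝ)).restrictScalars ℤ)
  replace hD (p : ℝ[X]) : D (algebraMap _ _ p) = algebraMap _ _ (derivative p) := hD p
  let a := algebraMap ℝ[X] (FractionRing ℝ[X])
  let h (j : ℕ) := a (derivative^[j] p)
  have hτ0 : a τ ≠ 0 := by
    simpa [a] using fun h0 : τ = 0 => hz (by rw [h0, eval_zero])
  have haτ : hankelDet h n = a τ := by rw [hτ, map_hankelDet]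
  have hform : sigmaForm (a (C N) - n + 1) (-n) (a (C N) + a (C A) - 1) 1 (a X)
      (hankelSigma D h (a (C N)) (a X) n) (D (hankelSigma D h (a (C N)) (a X) n))
      (a X * D (D (hankelSigma D h (a (C N)) (a X) n))) = 0 :=
    sigmaForm_hankelSigma (fun j => by simp only [h, a, hD, Function.iterate_succ_apply'])
      (by simp [a, hD]) (by simp [a, hD]) (by simp [a, hD])
      (by simpa [h] using congrArg a kummer) (haτ ▸ hτ0)
  refine SV_of_sigmaForm_fraction_eq_zero hD (P := X * derivative τ - C ((N - n + 1) * n) * τ)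
    (s := hankelSigma D h (a (C N)) (a X) n) ?_ ?_ hz ?_
  · simp only [hankelSigma, hankelLogDeriv, haτ, hD, a, map_sub, map_add, map_mul, map_natCast,
      map_one] at hτ0 ⊢
    field_simp
  · simpa only [a, map_sub, map_add, map_neg, map_natCast, map_one] using hform
  · filter_upwards [τ.continuous.continuousAt.eventually_ne hz] with t ht
    rw [Polynomial.deriv]
    simp only [eval_sub, eval_mul, eval_X, eval_C]
    field_simp

end RationalSolutions

section Laguerre

open Polynomial

/-- The associated Laguerre polynomial `L_N^{(α)}` as an element of `ℝ[X]`. -/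
def laguerrePoly (N : ℕ) (α : ℝ) : ℝ[X] :=
  ∑ k ∈ range (N + 1), C ((-1 : ℝ) ^ k * genBinom (N + α) (N - k) / Nat.factorial k) * X ^ k

theorem coeff_laguerrePoly (N : ℕ) (α : ℝ) (k : ℕ) :
    (laguerrePoly N α).coeff k =
      if k ≤ N then (-1 : ℝ) ^ k * genBinom (N + α) (N - k) / Nat.factorial k else 0 := by
  simp [laguerrePoly]

theorem genBinom_succ_mul (x : ℝ) (j : ℕ) :
    genBinom x (j + 1) * (j + 1) = genBinom x j * (x - j) := by
  rw [genBinom, genBinom, prod_range_succ, Nat.factorial_succ]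
  push_cast
  field_simp

theorem coeff_laguerrePoly_succ (N : ℕ) (α : ℝ) (k : ℕ) :
    (k + 1) * (k + 1 + α) * (laguerrePoly N α).coeff (k + 1) =
      -(N - k) * (laguerrePoly N α).coeff k := by
  simp only [coeff_laguerrePoly]
  obtain hlt | rfl | hgt := lt_trichotomy k N
  · obtain ⟨j, rfl⟩ : ∃ j, N = k + 1 + j := Nat.exists_eq_add_of_lt hlt |>.imp fun j h => by omega
    have hbinom := genBinom_succ_mul ((k + 1 + j : ℕ) + α) j
    rw [if_pos (by omega), if_pos (by omega), Nat.add_sub_cancel_left,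
      show k + 1 + j - k = j + 1 by omega, Nat.factorial_succ]
    push_cast at hbinom ⊢
    field_simp
    rw [pow_succ]
    linear_combination (-1 : ℝ) ^ k * hbinom
  · simp
  · simp [hgt.not_ge, (hgt.trans k.lt_succ_self).not_ge]

theorem laguerrePoly_kummer (N : ℕ) (α : ℝ) :
    X * derivative (derivative (laguerrePoly N α)) +
      (C (α + 1) - X) * derivative (laguerrePoly N α) + C (N : ℝ) * laguerrePoly N α = 0 := by
  ext j
  have hrec := coeff_laguerrePoly_succ N α j
  obtain _ | j := j
  · simp only [sub_mul, coeff_add, coeff_sub, coeff_C_zero, mul_coeff_zero, coeff_X_zero,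
      coeff_derivative, coeff_zero] at hrec ⊢
    push_cast at hrec ⊢
    linear_combination hrec
  · simp only [sub_mul, coeff_add, coeff_sub, coeff_C_mul, coeff_X_mul, coeff_derivative,
      coeff_zero] at hrec ⊢
    push_cast at hrec ⊢
    linear_combination hrec

theorem lagL_natCast (N : ℕ) (α : ℝ) : lagL N α = fun z => (laguerrePoly N α).eval z := by
  ext z
  simp [lagL, laguerrePoly, eval_finsetSum, mul_div_right_comm]

theorem iteratedDeriv_eval (p : ℝ[X]) (k : ℕ) :
    iteratedDeriv k (fun z => p.eval z) = fun z => (derivative^[k] p).eval z := by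
  induction k with
  | zero => simp
  | succ k ih =>
    rw [iteratedDeriv_succ, ih, Function.iterate_succ_apply']
    exact funext fun z => Polynomial.deriv _

theorem genLag_natCast (m n : ℕ) (μ : ℝ) :
    genLag m n μ = fun z =>
      (hankelDet (fun j => derivative^[j] (laguerrePoly (m + n) (μ + 1))) n).eval z := by
  ext z
  rw [genLag, ← Nat.cast_add, lagL_natCast]
  simp only [iteratedDeriv_eval]
  exact (map_hankelDet (evalRingHom z)
    (fun j => derivative^[j] (laguerrePoly (m + n) (μ + 1))) n).symm

end Laguerre

/-- rational solution of `S_V` from the generalised Laguerre polynomials. -/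
theorem sv_rational_solution (m n : ℕ) (hn : 1 ≤ n) (μ : ℝ) (σ : ℝ → ℝ)
    (hσ : σ = fun z =>
      z * deriv (genLag (m : ℤ) n μ) z / genLag (m : ℤ) n μ z - ((m : ℝ) + 1) * n) :
    ∀ z : ℝ, z ≠ 0 → genLag (m : ℤ) n μ z ≠ 0 →
      SV ((m : ℝ) + 1) (-(n : ℝ)) ((m : ℝ) + n + μ + 1) σ z := by
  intro z _ hz
  rw [genLag_natCast] at hz hσ
  have hSV := SV_hankelDet_of_kummer (laguerrePoly_kummer (m + n) (μ + 1)) rfl hz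
  have hν₁ : ((m + n : ℕ) : ℝ) - n + 1 = m + 1 := by push_cast; ring
  have hν₃ : ((m + n : ℕ) : ℝ) + (μ + 1 + 1) - 1 = m + n + μ + 1 := by push_cast; ring
  rwa [hν₁, hν₃, ← hσ] at hSV
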